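/- For n ≥ 1 and subsets I, J of {1,...,n-1}, the number of pairs of permutations (σ, τ) in S_n with στ = id, Des(σ) = I, and Des(τ) = J equals Σ_{λ ⊢ n} d_{λ,I} · d_{λ,J}. -/

import Mathlib

open scoped Classical

noncomputable section

/-- Descent set of a permutation of `Fin n`, as a subset of `{1, ..., n-1}`
(1-indexed: `i` is a descent of `π` iff `π(i) > π(i+1)`). -/
def permDes {n : ℕ} (σ : Equiv.Perm (Fin n)) : Finset ℕ :=
  (Finset.Icc 1 (n - 1)).filter fun i =>
    ∃ h : i < n, σ ⟨i, h⟩ < σ ⟨i - 1, by omega⟩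

/-- Number of entries of a semistandard Young tableau equal to `j`. -/
def ssytWeight {μ : YoungDiagram} (T : SemistandardYoungTableau μ) (j : ℕ) : ℕ :=
  (μ.cells.filter fun c => T c.1 c.2 = j).card

/-- A standard Young tableau with `n` boxes: each of `1, ..., n` appears exactly once. -/
def IsStdYT {μ : YoungDiagram} (n : ℕ) (T : SemistandardYoungTableau μ) : Prop :=
  ∀ k ∈ Finset.Icc 1 n, (μ.cells.filter fun c => T c.1 c.2 = k).card = 1

/-- Descent set of a standard Young tableau: `k` is a descent iff `k+1` lies in
a strictly lower row than `k`. -/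
def sytDes {μ : YoungDiagram} (n : ℕ) (T : SemistandardYoungTableau μ) : Finset ℕ :=
  (Finset.Icc 1 (n - 1)).filter fun k =>
    ∃ c₁ ∈ μ.cells, ∃ c₂ ∈ μ.cells,
      T c₁.1 c₁.2 = k ∧ T c₂.1 c₂.2 = k + 1 ∧ c₁.1 < c₂.1

/-- `d_{λ,I}`: the number of standard Young tableaux of shape `λ` with descent set `I`. -/
def dCoef (μ : YoungDiagram) (n : ℕ) (I : Finset ℕ) : ℕ :=
  Nat.card {T : SemistandardYoungTableau μ // IsStdYT n T ∧ sytDes n T = I}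

/-- The Young diagram of a partition of `n`. -/
def toYD {n : ℕ} (p : n.Partition) : YoungDiagram where
  cells := (Finset.range n ×ˢ Finset.range n).filter fun c =>
    c.1 < (p.parts.filter fun a => c.2 < a).card
  isLowerSet := by
    intro x y hyx hx
    simp only [Finset.coe_filter, Set.mem_setOf_eq, Finset.mem_product,
      Finset.mem_range] at hx ⊢
    obtain ⟨⟨h1, h2⟩, h3⟩ := hx
    refine ⟨⟨lt_of_le_of_lt hyx.1 h1, lt_of_le_of_lt hyx.2 h2⟩,
      lt_of_le_of_lt hyx.1 (lt_of_lt_of_le h3 ?_)⟩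
    exact Multiset.card_le_card
      (Multiset.monotone_filter_right _ fun a ha => lt_of_le_of_lt hyx.2 ha)

/-!
Fomin's growth diagrams realise the Robinson–Schensted correspondence with permutations and tableaux
treated symmetrically. Mark the squares `(i, σ i)` of an `n × n` board and propagate shapes from the
empty left and bottom borders by local rules. Since neighbouring shapes differ by at most one box,
only the row of that box is recorded, as a label on the edge. The rules are invertible, so `σ` is
determined by the labels along the top and right borders, and these can be any two ballot words of
the same content. Transposing the board exchanges `σ` with `σ⁻¹` and the top border with the right
border, so a single word suffices: the top word of `σ⁻¹` is the right word of `σ`. Comparing two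
adjacent columns from the bottom upwards shows that `σ` has a descent exactly where its top word has
an ascent. Reading the rows of the entries `1, ..., n` turns a standard tableau into a ballot word
whose ascents are its descents.
-/

lemma mem_iff_lt_card_of_isLowerSet {s : Finset ℕ} (hs : IsLowerSet (s : Set ℕ)) (c : ℕ) :
    c ∈ s ↔ c < s.card := by
  have hs' : s = Finset.range s.card := by
    refine Finset.eq_of_subset_of_card_le (fun c hc => Finset.mem_range.2 ?_) (by simp)
    have hsub : Finset.range (c + 1) ⊆ s := fun d hd =>
      hs (Nat.lt_succ_iff.1 (Finset.mem_range.1 hd)) hc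
    simpa using Finset.card_le_card hsub
  rw [hs', Finset.mem_range, Finset.card_range]

lemma exists_backward_chain {α : Type*} {P : ℕ → α → Prop} {R : ℕ → α → α → Prop} {m : ℕ}
    (step : ∀ i < m, ∀ b, P (i + 1) b → ∃ a, P i a ∧ R i a b) {b : α} (hb : P m b) :
    ∃ g : ℕ → α, g m = b ∧ (∀ i ≤ m, P i (g i)) ∧ ∀ i < m, R i (g i) (g (i + 1)) := by
  induction m generalizing b with
  | zero => exact ⟨fun _ => b, rfl, by simpa using hb, by simp⟩
  | succ m ih =>
    obtain ⟨a, ha, hR⟩ := step m m.lt_succ_self b hb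
    obtain ⟨g, rfl, hP, hg⟩ := ih (fun i hi => step i (by omega)) ha
    refine ⟨Function.update g (m + 1) b, by simp, fun i hi => ?_, fun i hi => ?_⟩
    · rcases Nat.le_succ_iff.1 hi with hi | rfl
      · simpa [Function.update, show i ≠ m + 1 by omega] using hP i hi
      · simpa [Function.update] using hb
    · rcases Nat.lt_succ_iff_lt_or_eq.1 hi with hi | rfl
      · simpa [Function.update, hi.ne, show i ≠ m + 1 by omega] using hg i hi
      · simpa [Function.update] using hR

/-! ### Local rules and ballot words -/

/-- Fomin's local rule on edge labels. An edge of a growth diagram is labelled by the row, counted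
from `1`, of the box added along it, and by `0` if the shape does not change. In a square whose
bottom and left edges are labelled `b` and `a`, marked if `x` holds, `bump x b a` labels the top
edge and `bump x a b` the right edge. -/
def bump (x : Prop) (b a : ℕ) : ℕ :=
  if b = a ∧ (b ≠ 0 ∨ x) then b + 1 else b

/-- The reverse local rule: in a square whose top and right edges are labelled `b` and `a`,
`unbump b a` labels the bottom edge and `unbump a b` the left edge. -/
def unbump (b a : ℕ) : ℕ :=
  if b = a then b - 1 else b

lemma unbump_bump (x : Prop) (b a : ℕ) : unbump (bump x b a) (bump x a b) = b := by
  unfold bump unbump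
  grind

lemma bump_unbump (b a : ℕ) : bump (b = 1 ∧ a = 1) (unbump b a) (unbump a b) = b := by
  unfold bump unbump
  grind

lemma bump_eq_one_iff {x : Prop} {b a : ℕ} (hx : x → b = 0 ∧ a = 0) :
    bump x b a = 1 ∧ bump x a b = 1 ↔ x := by
  unfold bump
  grind

lemma bump_eq_zero_iff {x : Prop} {b a : ℕ} (hx : x → b = 0 ∧ a = 0) :
    bump x b a = 0 ↔ b = 0 ∧ ¬x := by
  unfold bump
  grind

/-- The box of a row, counted from `1`, as the increment of a function giving the row lengths.
Rows are counted from `0` in the argument of this function, so that `box 0 = 0`. -/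
def box (a r : ℕ) : ℕ :=
  if a = r + 1 then 1 else 0

lemma box_zero : box 0 = 0 := by
  ext r
  simp [box]

lemma box_add_box_bump (x : Prop) (b a : ℕ) :
    box a + box (bump x b a) = box b + box (bump x a b) := by
  ext r
  simp only [Pi.add_apply, box, bump]
  grind

/-- A box can be added in row `a` (counted from `1`) to the shape with row lengths `ρ`. -/
def Addable (ρ : ℕ → ℕ) (a : ℕ) : Prop :=
  ∀ r, a = r + 2 → ρ (r + 1) < ρ r

/-- A box can be removed from row `a` (counted from `1`) of the shape with row lengths `ρ`. -/
def Removable (ρ : ℕ → ℕ) (a : ℕ) : Prop :=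
  ∀ r, a = r + 1 → ρ (r + 1) < ρ r

section Shape

variable {ρ : ℕ → ℕ} {a b : ℕ}

lemma Addable.antitone_add_box (hρ : Antitone ρ) (ha : Addable ρ a) : Antitone (ρ + box a) := by
  refine antitone_nat_of_succ_le fun r => ?_
  have := hρ r.le_succ
  have := ha r
  simp only [Pi.add_apply, box]
  grind

lemma removable_add_box (hρ : Antitone ρ) (a : ℕ) : Removable (ρ + box a) a := by
  rintro r rfl
  have := hρ r.le_succ
  simp only [Pi.add_apply, box]
  grind

lemma Removable.antitone_of_add_box (h : Antitone (ρ + box a)) (ha : Removable (ρ + box a) a) :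
    Antitone ρ := by
  refine antitone_nat_of_succ_le fun r => ?_
  have := h r.le_succ
  have := ha r
  simp only [Pi.add_apply, box] at *
  grind

lemma Addable.bump (hρ : Antitone ρ) (hb : Addable ρ b) (x : Prop) :
    Addable (ρ + box a) (bump x b a) := by
  intro r hr
  have := hρ r.le_succ
  have := hb r
  simp only [Pi.add_apply, box, _root_.bump] at *
  grind

lemma Removable.eq_zero (ha : Removable 0 a) : a = 0 := by
  by_contra h0
  exact absurd (ha (a - 1) (by omega)) (lt_irrefl 0)

lemma Removable.unbump (h : Antitone (ρ + box a)) (hb : Removable (ρ + box a) b) :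
    Removable ρ (unbump b a) := by
  intro r hr
  have := h r.le_succ
  have := hb r
  simp only [Pi.add_apply, box, _root_.unbump] at *
  grind

end Shape

/-- The content of the first `m` letters of `u`: the letter `r + 1` occurs `content u m r` times.
The letter `0` stands for an absent letter. -/
def content (u : ℕ → ℕ) (m r : ℕ) : ℕ :=
  Nat.count (fun k => u k = r + 1) m

lemma content_zero (u : ℕ → ℕ) : content u 0 = 0 := by
  ext r
  simp [content]

lemma content_succ (u : ℕ → ℕ) (m : ℕ) : content u (m + 1) = content u m + box (u m) := by
  ext r
  simp [content, box, Nat.count_succ]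

lemma content_eq_zero_iff {u : ℕ → ℕ} {m : ℕ} : content u m = 0 ↔ ∀ k < m, u k = 0 := by
  simp only [funext_iff, content, Pi.zero_apply, Nat.count_iff_forall_not]
  refine ⟨fun h k hk => ?_, fun h r k hk => by simp [h k hk]⟩
  by_contra h0
  exact h (u k - 1) k hk (by omega)

/-- The ballot condition on the first `n` letters of `u`: the contents of the prefixes form a chain
of partitions. -/
def IsBallot (n : ℕ) (u : ℕ → ℕ) : Prop :=
  ∀ m ≤ n, Antitone (content u m)

lemma IsBallot.removable {n k : ℕ} {u : ℕ → ℕ} (hu : IsBallot n u) (hk : k < n) :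
    Removable (content u (k + 1)) (u k) := by
  rw [content_succ]
  exact removable_add_box (hu k hk.le) (u k)

/-! ### Growth diagrams -/

/-- A strip of `n` squares of a growth diagram stacked on top of each other, with marks `x`,
horizontal labels `h`, left labels `v` and right labels `w`, all listed upwards. -/
structure IsGrowthStrip (n : ℕ) (x : ℕ → Prop) (h v w : ℕ → ℕ) : Prop where
  bot : h 0 = 0
  mark : ∀ j < n, x j → h j = 0 ∧ v j = 0
  hor : ∀ j < n, h (j + 1) = bump (x j) (h j) (v j)
  ver : ∀ j < n, w j = bump (x j) (v j) (h j)

namespace IsGrowthStrip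

variable {n : ℕ} {x : ℕ → Prop} {h v w : ℕ → ℕ}

lemma hor_eq_zero_iff (s : IsGrowthStrip n x h v w) {j : ℕ} (hj : j ≤ n) :
    h j = 0 ↔ ∀ k < j, ¬x k := by
  induction j with
  | zero => simp [s.bot]
  | succ j ih =>
    rw [s.hor j hj, bump_eq_zero_iff (s.mark j hj), ih (by omega), Nat.forall_lt_succ_right]

lemma eq_of_mark (s : IsGrowthStrip n x h v w) {j k : ℕ} (hj : j < n) (hk : k < n) (hxj : x j)
    (hxk : x k) : j = k := by
  rcases lt_trichotomy j k with hjk | rfl | hkj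
  · exact absurd hxj ((s.hor_eq_zero_iff hk.le).1 (s.mark k hk hxk).1 j hjk)
  · rfl
  · exact absurd hxk ((s.hor_eq_zero_iff hj.le).1 (s.mark j hj hxj).1 k hkj)

lemma hor_eq_unbump (s : IsGrowthStrip n x h v w) {j : ℕ} (hj : j < n) :
    h j = unbump (h (j + 1)) (w j) := by
  rw [s.hor j hj, s.ver j hj, unbump_bump]

lemma left_eq_unbump (s : IsGrowthStrip n x h v w) {j : ℕ} (hj : j < n) :
    v j = unbump (w j) (h (j + 1)) := by
  rw [s.hor j hj, s.ver j hj, unbump_bump]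

lemma mark_iff (s : IsGrowthStrip n x h v w) {j : ℕ} (hj : j < n) :
    x j ↔ h (j + 1) = 1 ∧ w j = 1 := by
  rw [s.hor j hj, s.ver j hj, bump_eq_one_iff (s.mark j hj)]

lemma content_right (s : IsGrowthStrip n x h v w) {j : ℕ} (hj : j ≤ n) :
    content w j = content v j + box (h j) := by
  induction j with
  | zero => simp [content_zero, s.bot, box_zero]
  | succ j ih =>
    rw [content_succ, content_succ, ih (by omega), s.hor j hj, s.ver j hj, add_assoc, add_assoc,
      box_add_box_bump]

lemma addable (s : IsGrowthStrip n x h v w) (hv : IsBallot n v) {j : ℕ} (hj : j ≤ n) :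
    Addable (content v j) (h j) := by
  induction j with
  | zero => simp [Addable, s.bot]
  | succ j ih =>
    rw [content_succ, s.hor j hj]
    exact (ih (by omega)).bump (hv j (by omega)) (x j)

lemma isBallot_right (s : IsGrowthStrip n x h v w) (hv : IsBallot n v) : IsBallot n w := by
  intro j hj
  rw [s.content_right hj]
  exact (s.addable hv hj).antitone_add_box (hv j hj)

lemma mark_left_unique {x' : ℕ → Prop} {h' v' w' : ℕ → ℕ} (s : IsGrowthStrip n x h v w)
    (s' : IsGrowthStrip n x' h' v' w') (hw : ∀ j < n, w j = w' j) (hn : h n = h' n) :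
    (∀ j < n, x j ↔ x' j) ∧ ∀ j < n, v j = v' j := by
  have hh : ∀ j ≤ n, h j = h' j := by
    intro j hj
    induction hj using Nat.decreasingInduction with
    | self => exact hn
    | of_succ j hj ih => rw [s.hor_eq_unbump hj, s'.hor_eq_unbump hj, ih, hw j hj]
  exact ⟨fun j hj => by rw [s.mark_iff hj, s'.mark_iff hj, hh (j + 1) hj, hw j hj],
    fun j hj => by rw [s.left_eq_unbump hj, s'.left_eq_unbump hj, hh (j + 1) hj, hw j hj]⟩

variable {x' : ℕ → Prop} {h' w' : ℕ → ℕ}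

lemma hor_le_of_mark_below (s : IsGrowthStrip n x h v w) (s' : IsGrowthStrip n x' h' w w')
    (hx : ∀ j < n, x' j → h j ≠ 0) {j : ℕ} (hj : j ≤ n) : h' j ≤ h j := by
  induction j with
  | zero => simp [s'.bot]
  | succ j ih =>
    have := hx j hj
    have := ih (by omega)
    rw [s.hor j hj, s'.hor j hj, s.ver j hj]
    unfold bump
    grind

lemma hor_lt_of_mark_above (s : IsGrowthStrip n x h v w) (s' : IsGrowthStrip n x' h' w w')
    (hx : ∀ j < n, x j → h' j ≠ 0) {j : ℕ} (hj : j ≤ n) (h0 : h j ≠ 0) : h j < h' j := by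
  induction j with
  | zero => exact absurd s.bot h0
  | succ j ih =>
    have := hx j hj
    have := ih (by omega)
    rw [s.hor j hj, s'.hor j hj, s.ver j hj]
    rw [s.hor j hj] at h0
    unfold bump at *
    grind

end IsGrowthStrip

lemma exists_isGrowthStrip {n a : ℕ} {w : ℕ → ℕ} (hw : IsBallot n w)
    (ha : Removable (content w n) a) :
    ∃ x h v, IsGrowthStrip n x h v w ∧ h n = a ∧ IsBallot n v := by
  obtain ⟨h, hn, hrem, hh⟩ := exists_backward_chain (P := fun j => Removable (content w j))
    (R := fun j a b => a = unbump b (w j)) (fun j hj b hb => ⟨unbump b (w j), by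
      have hanti := hw (j + 1) hj
      rw [content_succ] at hb hanti
      exact hb.unbump hanti, rfl⟩) ha
  have h0 : h 0 = 0 := (content_zero w ▸ hrem 0 n.zero_le).eq_zero
  have s : IsGrowthStrip n (fun j => h (j + 1) = 1 ∧ w j = 1) h
      (fun j => unbump (w j) (h (j + 1))) w :=
    { bot := h0
      mark := fun j hj ⟨hh1, hw1⟩ => by simp [hh j hj, hh1, hw1, unbump]
      hor := fun j hj => by rw [hh j hj, bump_unbump]
      ver := fun j hj => by rw [hh j hj, and_comm, bump_unbump] }
  refine ⟨_, h, _, s, hn, fun j hj => ?_⟩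
  have hc := s.content_right hj
  exact Removable.antitone_of_add_box (hc ▸ hw j hj) (hc ▸ hrem j hj)

/-- A growth diagram on `m × n` squares with empty shapes along its left and bottom borders:
`x i j` marks the square in column `i` and row `j`, whose bottom and left edges are labelled
`H i j` and `V i j`. -/
structure IsGrowthDiagram (m n : ℕ) (x : ℕ → ℕ → Prop) (H V : ℕ → ℕ → ℕ) : Prop where
  left : ∀ j < n, V 0 j = 0
  strip : ∀ i < m, IsGrowthStrip n (x i) (H i) (V i) (V (i + 1))

namespace IsGrowthDiagram

variable {m n : ℕ} {x x' : ℕ → ℕ → Prop} {H V H' V' : ℕ → ℕ → ℕ}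

lemma symm (d : IsGrowthDiagram m n x H V) :
    IsGrowthDiagram n m (Function.swap x) (Function.swap V) (Function.swap H) where
  left i hi := (d.strip i hi).bot
  strip j hj :=
    { bot := d.left j hj
      mark := fun i hi hx => ((d.strip i hi).mark j hj hx).symm
      hor := fun i hi => (d.strip i hi).ver j hj
      ver := fun i hi => (d.strip i hi).hor j hj }

lemma isBallot_ver (d : IsGrowthDiagram m n x H V) {i : ℕ} (hi : i ≤ m) : IsBallot n (V i) := by
  induction i with
  | zero =>
    intro j hj
    rw [content_eq_zero_iff.2 fun k hk => d.left k (by omega)]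
    exact antitone_const
  | succ i ih => exact (d.strip i hi).isBallot_right (ih (by omega))

lemma content_hor (d : IsGrowthDiagram m n x H V) {i j : ℕ} (hi : i ≤ m) (hj : j ≤ n) :
    content (fun k => H k j) i = content (V i) j := by
  induction i with
  | zero => rw [content_zero, content_eq_zero_iff.2 fun k hk => d.left k (by omega)]
  | succ i ih => rw [content_succ, ih (by omega), (d.strip i hi).content_right hj]

lemma mark_unique (d : IsGrowthDiagram m n x H V) (d' : IsGrowthDiagram m n x' H' V')
    (htop : ∀ i < m, H i n = H' i n) (hright : ∀ j < n, V m j = V' m j) {i j : ℕ} (hi : i < m)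
    (hj : j < n) : x i j ↔ x' i j := by
  have hver : ∀ i ≤ m, ∀ j < n, V i j = V' i j := by
    intro i hi
    induction hi using Nat.decreasingInduction with
    | self => exact hright
    | of_succ i hi ih => exact ((d.strip i hi).mark_left_unique (d'.strip i hi) ih (htop i hi)).2
  exact ((d.strip i hi).mark_left_unique (d'.strip i hi) (hver (i + 1) hi) (htop i hi)).1 j hj

end IsGrowthDiagram

lemma exists_isGrowthDiagram {m n : ℕ} {p q : ℕ → ℕ} (hq : IsBallot m q) (hp : IsBallot n p)
    (hpq : content q m = content p n) :
    ∃ x H V, IsGrowthDiagram m n x H V ∧ (∀ i < m, H i n = q i) ∧ V m = p := by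
  obtain ⟨V, hVm, hV, hstrip⟩ := exists_backward_chain
    (P := fun i v => IsBallot n v ∧ content v n = content q i)
    (R := fun i v w => ∃ x h, IsGrowthStrip n x h v w ∧ h n = q i) (m := m)
    (fun i hi w hw => by
      obtain ⟨x, h, v, s, hn, hv⟩ := exists_isGrowthStrip hw.1 (hw.2 ▸ hq.removable hi)
      have hc := s.content_right le_rfl
      rw [hw.2, content_succ, hn] at hc
      exact ⟨v, ⟨hv, (add_right_cancel hc).symm⟩, x, h, s, hn⟩) ⟨hp, hpq.symm⟩
  choose! x H hs hq using hstrip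
  refine ⟨x, H, V, ⟨?_, hs⟩, hq, hVm⟩
  rw [← content_eq_zero_iff, (hV 0 m.zero_le).2, content_zero]

/-- Marks of which no two lie in the same row or in the same column. -/
structure IsRookPlacement (x : ℕ → ℕ → Prop) : Prop where
  row : ∀ ⦃i i' j⦄, x i j → x i' j → i = i'
  column : ∀ ⦃i j j'⦄, x i j → x i j' → j = j'

/-- The horizontal labels of the growth diagram with marks `x`: `label x i j` is the label of the
bottom edge of the square in column `i` and row `j`. The vertical labels are the horizontal labels
of the transposed diagram. -/
def label (x : ℕ → ℕ → Prop) : ℕ → ℕ → ℕ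
  | _, 0 => 0
  | i, j + 1 => bump (x i j) (label x i j) (label (Function.swap x) j i)
termination_by i j => i + j

lemma label_zero (x : ℕ → ℕ → Prop) (i : ℕ) : label x i 0 = 0 := by
  rw [label]

lemma label_succ (x : ℕ → ℕ → Prop) (i j : ℕ) :
    label x i (j + 1) = bump (x i j) (label x i j) (label (Function.swap x) j i) := by
  rw [label]

lemma label_eq_zero {x : ℕ → ℕ → Prop} {i j : ℕ} (hx : ∀ k < j, ¬x i k) : label x i j = 0 := by
  induction j with
  | zero => exact label_zero x i
  | succ j ih =>
    simp [label_succ, bump, ih fun k hk => hx k (by omega), hx j (by omega)]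

lemma isGrowthDiagram_label {x : ℕ → ℕ → Prop} (hx : IsRookPlacement x) (m n : ℕ) :
    IsGrowthDiagram m n x (label x) fun i j => label (Function.swap x) j i where
  left _ _ := label_zero _ _
  strip i _ :=
    { bot := label_zero x i
      mark := fun _ _ h => ⟨label_eq_zero fun _ hk h' => hk.ne (hx.column h' h),
        label_eq_zero fun _ hk h' => hk.ne (hx.row h' h)⟩
      hor := fun j _ => label_succ x i j
      ver := fun j _ => label_succ (Function.swap x) j i }

lemma IsGrowthDiagram.hor_eq_label {m n : ℕ} {x y : ℕ → ℕ → Prop} {H V : ℕ → ℕ → ℕ}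
    (d : IsGrowthDiagram m n x H V) (hxy : ∀ i < m, ∀ j < n, (x i j ↔ y i j)) {i j : ℕ}
    (hi : i < m) (hj : j ≤ n) : H i j = label y i j := by
  induction hs : i + j using Nat.strong_induction_on generalizing m n x y H V i j with
  | _ s ih =>
    cases j with
    | zero => rw [label_zero, (d.strip i hi).bot]
    | succ j =>
      rw [label_succ, (d.strip i hi).hor j hj, propext (hxy i hi j hj),
        ih (i + j) (by omega) d hxy hi (Nat.le_of_succ_le hj) rfl,
        ← ih (j + i) (by omega) d.symm (fun j hj i hi => hxy i hi j hj) hj hi.le rfl]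

/-! ### Permutations -/

/-- Words `u` encoding standard tableaux: the first `n` letters are positive and satisfy the ballot
condition, all further letters are absent. -/
structure IsLatticeWord (n : ℕ) (u : ℕ → ℕ) : Prop where
  eq_zero_iff : ∀ k, u k = 0 ↔ n ≤ k
  isBallot : IsBallot n u

/-- The ascents of the first `n` letters of `u`, at positions counted from `1`. They correspond to
the descents of tableaux and permutations. -/
def wordAsc (n : ℕ) (u : ℕ → ℕ) : Finset ℕ :=
  (Finset.Icc 1 (n - 1)).filter fun i => u (i - 1) < u i

section Perm

variable {n : ℕ}

/-- The permutation matrix of `σ` as a set of marks. -/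
def permGraph (σ : Equiv.Perm (Fin n)) (i j : ℕ) : Prop :=
  ∃ hi : i < n, (σ ⟨i, hi⟩ : ℕ) = j

lemma permGraph_apply (σ : Equiv.Perm (Fin n)) (i : Fin n) : permGraph σ i (σ i) :=
  ⟨i.isLt, rfl⟩

lemma permGraph_iff {σ : Equiv.Perm (Fin n)} {i j : Fin n} : permGraph σ i j ↔ σ i = j := by
  simp [permGraph, Fin.ext_iff]

lemma permGraph_inv (σ : Equiv.Perm (Fin n)) : permGraph σ⁻¹ = Function.swap (permGraph σ) := by
  ext i j
  constructor
  · rintro ⟨hi, rfl⟩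
    simpa using permGraph_apply σ (σ⁻¹ ⟨i, hi⟩)
  · rintro ⟨hj, rfl⟩
    simpa using permGraph_apply σ⁻¹ (σ ⟨j, hj⟩)

lemma permGraph_column (σ : Equiv.Perm (Fin n)) {i j j' : ℕ} (hj : permGraph σ i j)
    (hj' : permGraph σ i j') : j = j' := by
  obtain ⟨_, rfl⟩ := hj
  obtain ⟨_, rfl⟩ := hj'
  rfl

lemma isRookPlacement_permGraph (σ : Equiv.Perm (Fin n)) : IsRookPlacement (permGraph σ) where
  row i i' j hi hi' := by
    have hinv : ∀ k, permGraph σ k j → permGraph σ⁻¹ j k := fun k hk => by rwa [permGraph_inv]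
    exact permGraph_column σ⁻¹ (hinv i hi) (hinv i' hi')
  column _ _ _ := permGraph_column σ

/-- The labels along the top border of the growth diagram of `σ`; they encode the recording tableau
of `σ` under the Robinson–Schensted correspondence. -/
def recordingWord (σ : Equiv.Perm (Fin n)) (k : ℕ) : ℕ :=
  label (permGraph σ) k n

lemma recordingWord_inv (σ : Equiv.Perm (Fin n)) :
    recordingWord σ⁻¹ = fun j => label (Function.swap (permGraph σ)) j n := by
  ext j
  rw [recordingWord, permGraph_inv]

lemma isGrowthDiagram_permGraph (σ : Equiv.Perm (Fin n)) :
    IsGrowthDiagram n n (permGraph σ) (label (permGraph σ))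
      fun i j => label (Function.swap (permGraph σ)) j i :=
  isGrowthDiagram_label (isRookPlacement_permGraph σ) n n

lemma recordingWord_eq_zero_iff (σ : Equiv.Perm (Fin n)) (k : ℕ) :
    recordingWord σ k = 0 ↔ n ≤ k := by
  refine ⟨fun h => ?_, fun hk => label_eq_zero fun _ _ h => h.1.not_ge hk⟩
  by_contra! hk
  exact (((isGrowthDiagram_permGraph σ).strip k hk).hor_eq_zero_iff le_rfl).1 h _ (σ ⟨k, hk⟩).isLt
    (permGraph_apply σ ⟨k, hk⟩)

lemma isLatticeWord_recordingWord (σ : Equiv.Perm (Fin n)) : IsLatticeWord n (recordingWord σ) where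
  eq_zero_iff := recordingWord_eq_zero_iff σ
  isBallot := (isGrowthDiagram_permGraph σ).symm.isBallot_ver le_rfl

lemma content_recordingWord_inv (σ : Equiv.Perm (Fin n)) :
    content (recordingWord σ⁻¹) n = content (recordingWord σ) n := by
  rw [recordingWord_inv]
  exact ((isGrowthDiagram_permGraph σ).content_hor le_rfl le_rfl).symm

lemma recordingWord_lt_succ_iff (σ : Equiv.Perm (Fin n)) {k : ℕ} (hk : k + 1 < n) :
    recordingWord σ k < recordingWord σ (k + 1) ↔ σ ⟨k + 1, hk⟩ < σ ⟨k, by omega⟩ := by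
  have s := (isGrowthDiagram_permGraph σ).strip k (by omega)
  have s' := (isGrowthDiagram_permGraph σ).strip (k + 1) hk
  have hpos : recordingWord σ k ≠ 0 := by
    rw [Ne, recordingWord_eq_zero_iff]
    omega
  have hne : σ ⟨k + 1, hk⟩ ≠ σ ⟨k, by omega⟩ := σ.injective.ne (by simp)
  rcases lt_or_gt_of_ne hne with hlt | hgt
  · refine iff_of_true (s.hor_lt_of_mark_above s' (fun j hj hx => ?_) le_rfl hpos) hlt
    obtain ⟨_, rfl⟩ := hx
    rw [Ne, s'.hor_eq_zero_iff hj.le]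
    exact fun h => h _ hlt (permGraph_apply σ ⟨k + 1, hk⟩)
  · refine iff_of_false (s.hor_le_of_mark_below s' (fun j hj hx => ?_) le_rfl).not_gt hgt.not_gt
    obtain ⟨_, rfl⟩ := hx
    rw [Ne, s.hor_eq_zero_iff hj.le]
    exact fun h => h _ hgt (permGraph_apply σ ⟨k, by omega⟩)

lemma wordAsc_recordingWord (σ : Equiv.Perm (Fin n)) :
    wordAsc n (recordingWord σ) = permDes σ := by
  refine Finset.filter_congr fun i hi => ?_
  obtain ⟨k, rfl⟩ := Nat.exists_eq_add_of_le' (Finset.mem_Icc.1 hi).1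
  have hk : k + 1 < n := by
    have := Finset.mem_Icc.1 hi
    omega
  simpa [hk] using recordingWord_lt_succ_iff σ hk

lemma recordingWord_injective {σ τ : Equiv.Perm (Fin n)} (h : recordingWord σ = recordingWord τ)
    (hinv : recordingWord σ⁻¹ = recordingWord τ⁻¹) : σ = τ := by
  rw [recordingWord_inv, recordingWord_inv] at hinv
  ext i : 1
  have hi := (isGrowthDiagram_permGraph σ).mark_unique (isGrowthDiagram_permGraph τ)
    (fun k _ => congrFun h k) (fun k _ => congrFun hinv k) i.isLt (σ i).isLt
  exact (permGraph_iff.1 (hi.1 (permGraph_apply σ i))).symm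

lemma IsGrowthDiagram.exists_perm {x : ℕ → ℕ → Prop} {H V : ℕ → ℕ → ℕ}
    (d : IsGrowthDiagram n n x H V) (htop : ∀ i < n, H i n ≠ 0) (hright : ∀ j < n, V n j ≠ 0) :
    ∃ σ : Equiv.Perm (Fin n), ∀ i < n, ∀ j < n, (x i j ↔ permGraph σ i j) := by
  have hcolumn : ∀ i : Fin n, ∃ j : Fin n, x i j := by
    intro i
    simpa [(d.strip i i.isLt).hor_eq_zero_iff le_rfl, Fin.exists_iff] using htop i i.isLt
  choose f hf using hcolumn
  have hf_eq : ∀ i j : Fin n, x i j → f i = j := fun i j hx =>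
    Fin.ext ((d.strip i i.isLt).eq_of_mark (f i).isLt j.isLt (hf i) hx)
  have hsurj : Function.Surjective f := by
    intro j
    have hj := hright j j.isLt
    rw [Ne, (d.symm.strip j j.isLt).hor_eq_zero_iff le_rfl] at hj
    push Not at hj
    obtain ⟨i, hi, hx⟩ := hj
    exact ⟨⟨i, hi⟩, hf_eq ⟨i, hi⟩ j hx⟩
  refine ⟨Equiv.ofBijective f (Finite.surjective_iff_bijective.1 hsurj), fun i hi j hj => ?_⟩
  rw [permGraph_iff (i := ⟨i, hi⟩) (j := ⟨j, hj⟩)]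
  exact ⟨hf_eq ⟨i, hi⟩ ⟨j, hj⟩, fun h : f ⟨i, hi⟩ = ⟨j, hj⟩ => by simpa [h] using hf ⟨i, hi⟩⟩

lemma IsLatticeWord.recordingWord_eq {q : ℕ → ℕ} (hq : IsLatticeWord n q) {σ : Equiv.Perm (Fin n)}
    (h : ∀ k < n, q k = recordingWord σ k) : recordingWord σ = q := by
  ext k
  by_cases hk : k < n
  · exact (h k hk).symm
  · rw [(hq.eq_zero_iff k).2 (by omega), (recordingWord_eq_zero_iff σ k).2 (by omega)]

lemma exists_recordingWord_eq {q p : ℕ → ℕ} (hq : IsLatticeWord n q) (hp : IsLatticeWord n p)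
    (hqp : content q n = content p n) :
    ∃ σ : Equiv.Perm (Fin n), recordingWord σ = q ∧ recordingWord σ⁻¹ = p := by
  obtain ⟨x, H, V, d, htop, rfl⟩ := exists_isGrowthDiagram hq.isBallot hp.isBallot hqp
  obtain ⟨σ, hσ⟩ := d.exists_perm
    (fun i hi => by rw [htop i hi, Ne, hq.eq_zero_iff]; omega)
    (fun j hj => by rw [Ne, hp.eq_zero_iff]; omega)
  refine ⟨σ, hq.recordingWord_eq fun k hk => ?_, hp.recordingWord_eq fun k hk => ?_⟩
  · rw [← htop k hk, recordingWord, d.hor_eq_label hσ hk le_rfl]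
  · rw [recordingWord_inv]
    exact d.symm.hor_eq_label (fun j hj i hi => hσ i hi j hj) hk le_rfl

end Perm

/-! ### Standard tableaux -/

section Tableau

/-- The word of a tableau: its letter at `k` is the row, counted from `1`, of the entry `k + 1`,
and `0` if there is no such entry. -/
def rowWord {μ : YoungDiagram} (T : SemistandardYoungTableau μ) (k : ℕ) : ℕ :=
  (μ.cells.filter fun c => T c.1 c.2 = k + 1).sup fun c => c.1 + 1

variable {μ : YoungDiagram} {n : ℕ} {T : SemistandardYoungTableau μ}

lemma IsStdYT.image_eq (hT : IsStdYT n T) (hμ : μ.card = n) :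
    μ.cells.image (fun c => T c.1 c.2) = Finset.Icc 1 n := by
  refine (Finset.eq_of_subset_of_card_le (fun k hk => ?_) ?_).symm
  · obtain ⟨c, hc⟩ := Finset.card_pos.1 ((hT k hk).symm ▸ Nat.one_pos)
    rw [Finset.mem_filter] at hc
    exact Finset.mem_image.2 ⟨c, hc⟩
  · simpa [← hμ] using Finset.card_image_le

lemma IsStdYT.injOn (hT : IsStdYT n T) (hμ : μ.card = n) :
    Set.InjOn (fun c : ℕ × ℕ => T c.1 c.2) μ.cells := by
  rw [← Finset.card_image_iff, hT.image_eq hμ, Nat.card_Icc, Nat.add_sub_cancel]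
  exact hμ.symm

lemma IsStdYT.entry_mem (hT : IsStdYT n T) (hμ : μ.card = n) {r c : ℕ} (hrc : (r, c) ∈ μ) :
    1 ≤ T r c ∧ T r c ≤ n := by
  rw [← Finset.mem_Icc, ← hT.image_eq hμ]
  exact Finset.mem_image_of_mem (fun c : ℕ × ℕ => T c.1 c.2) hrc

lemma rowWord_entry (hT : IsStdYT n T) (hμ : μ.card = n) {r c k : ℕ} (hrc : (r, c) ∈ μ)
    (hk : T r c = k + 1) : rowWord T k = r + 1 := by
  have hfilter : μ.cells.filter (fun d => T d.1 d.2 = k + 1) = {(r, c)} := by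
    ext d
    rw [Finset.mem_filter, Finset.mem_singleton]
    refine ⟨fun hd => hT.injOn hμ hd.1 hrc (hd.2.trans hk.symm), ?_⟩
    rintro rfl
    exact ⟨hrc, hk⟩
  rw [rowWord, hfilter, Finset.sup_singleton]

lemma rowWord_eq_succ_iff (hT : IsStdYT n T) (hμ : μ.card = n) {k r : ℕ} :
    rowWord T k = r + 1 ↔ ∃ c, (r, c) ∈ μ ∧ T r c = k + 1 := by
  refine ⟨fun h => ?_, fun ⟨c, hrc, hk⟩ => rowWord_entry hT hμ hrc hk⟩
  have hne : (μ.cells.filter fun d => T d.1 d.2 = k + 1).Nonempty := by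
    rw [Finset.nonempty_iff_ne_empty]
    intro hempty
    simp [rowWord, hempty] at h
  obtain ⟨⟨r', c⟩, hd⟩ := hne
  rw [Finset.mem_filter] at hd
  obtain rfl : r' = r := by simpa [h] using (rowWord_entry hT hμ hd.1 hd.2).symm
  exact ⟨c, hd⟩

lemma rowWord_eq_zero_iff (hT : IsStdYT n T) (hμ : μ.card = n) (k : ℕ) :
    rowWord T k = 0 ↔ n ≤ k := by
  refine ⟨fun h0 => ?_, fun hk => ?_⟩
  · by_contra! hk
    have hmem : k + 1 ∈ μ.cells.image fun c => T c.1 c.2 := by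
      rw [hT.image_eq hμ, Finset.mem_Icc]
      omega
    obtain ⟨⟨r, c⟩, hrc, hc⟩ := Finset.mem_image.1 hmem
    exact r.succ_ne_zero ((rowWord_entry hT hμ hrc hc).symm.trans h0)
  · by_contra h0
    obtain ⟨r, hr⟩ := Nat.exists_eq_succ_of_ne_zero h0
    obtain ⟨c, hrc, hc⟩ := (rowWord_eq_succ_iff hT hμ).1 hr
    have := (hT.entry_mem hμ hrc).2
    omega

lemma content_rowWord (hT : IsStdYT n T) (hμ : μ.card = n) (m r : ℕ) :
    content (rowWord T) m r = ((Finset.range (μ.rowLen r)).filter fun c => T r c ≤ m).card := by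
  have hmem : ∀ c, c ∈ (Finset.range (μ.rowLen r)).filter (fun c => T r c ≤ m) ↔
      (r, c) ∈ μ ∧ T r c ≤ m := by
    simp [YoungDiagram.mem_iff_lt_rowLen]
  rw [content, Nat.count_eq_card_filter_range]
  symm
  refine Finset.card_nbij (fun c => T r c - 1) (fun c hc => ?_) (fun c hc d hd hcd => ?_)
    (fun k hk => ?_)
  · rw [Finset.mem_coe, hmem] at hc
    have hpos := (hT.entry_mem hμ hc.1).1
    rw [Finset.mem_coe, Finset.mem_filter, Finset.mem_range]
    exact ⟨show T r c - 1 < m by omega,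
      rowWord_entry hT hμ hc.1 (show T r c = T r c - 1 + 1 by omega)⟩
  · rw [Finset.mem_coe, hmem] at hc hd
    have hpos := (hT.entry_mem hμ hc.1).1
    have hpos' := (hT.entry_mem hμ hd.1).1
    have heq : T r c = T r d := by
      simp only at hcd
      omega
    exact congrArg Prod.snd (hT.injOn hμ hc.1 hd.1 heq)
  · rw [Finset.mem_coe, Finset.mem_filter, Finset.mem_range] at hk
    obtain ⟨c, hrc, hc⟩ := (rowWord_eq_succ_iff hT hμ).1 hk.2
    exact ⟨c, (hmem c).2 ⟨hrc, by omega⟩, by simp [hc]⟩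

lemma lt_content_rowWord_iff (hT : IsStdYT n T) (hμ : μ.card = n) {m r c : ℕ} :
    c < content (rowWord T) m r ↔ (r, c) ∈ μ ∧ T r c ≤ m := by
  have hlower : IsLowerSet
      (((Finset.range (μ.rowLen r)).filter fun c => T r c ≤ m : Finset ℕ) : Set ℕ) := by
    intro c d hdc hc
    simp only [Finset.coe_filter, Finset.mem_range, Set.mem_ofPred_eq] at hc ⊢
    exact ⟨hdc.trans_lt hc.1,
      (T.row_weak_of_le hdc (YoungDiagram.mem_iff_lt_rowLen.2 hc.1)).trans hc.2⟩
  rw [content_rowWord hT hμ, ← mem_iff_lt_card_of_isLowerSet hlower, Finset.mem_filter,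
    Finset.mem_range, YoungDiagram.mem_iff_lt_rowLen]

lemma isLatticeWord_rowWord (hT : IsStdYT n T) (hμ : μ.card = n) :
    IsLatticeWord n (rowWord T) where
  eq_zero_iff := rowWord_eq_zero_iff hT hμ
  isBallot m _ := antitone_nat_of_succ_le fun r => le_of_forall_lt fun c hc => by
    rw [lt_content_rowWord_iff hT hμ] at hc ⊢
    exact ⟨μ.up_left_mem r.le_succ le_rfl hc.1, (T.col_strict r.lt_succ_self hc.1).le.trans hc.2⟩

lemma content_rowWord_eq_rowLen (hT : IsStdYT n T) (hμ : μ.card = n) :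
    content (rowWord T) n = μ.rowLen := by
  ext r
  refine eq_of_forall_lt_iff fun c => ?_
  rw [lt_content_rowWord_iff hT hμ, ← YoungDiagram.mem_iff_lt_rowLen]
  exact and_iff_left_of_imp fun hrc => (hT.entry_mem hμ hrc).2

lemma rowWord_injective {T' : SemistandardYoungTableau μ} (hT : IsStdYT n T) (hT' : IsStdYT n T')
    (hμ : μ.card = n) (h : rowWord T = rowWord T') : T = T' := by
  ext r c
  by_cases hrc : (r, c) ∈ μ
  · refine eq_of_forall_ge_iff fun m => ?_
    have hm := lt_content_rowWord_iff hT hμ (m := m) (r := r) (c := c)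
    rw [h, lt_content_rowWord_iff hT' hμ] at hm
    simpa [hrc] using hm.symm
  · rw [T.zeros hrc, T'.zeros hrc]

lemma wordAsc_rowWord (hT : IsStdYT n T) (hμ : μ.card = n) :
    wordAsc n (rowWord T) = sytDes n T := by
  refine Finset.filter_congr fun i hi => ?_
  obtain ⟨k, rfl⟩ := Nat.exists_eq_add_of_le' (Finset.mem_Icc.1 hi).1
  have hk : k + 1 < n := by
    have := Finset.mem_Icc.1 hi
    omega
  rw [Nat.add_sub_cancel]
  constructor
  · intro hlt
    obtain ⟨r, hr⟩ := Nat.exists_eq_succ_of_ne_zero (n := rowWord T k)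
      (by rw [Ne, rowWord_eq_zero_iff hT hμ]; omega)
    obtain ⟨s, hs⟩ := Nat.exists_eq_succ_of_ne_zero (n := rowWord T (k + 1))
      (by rw [Ne, rowWord_eq_zero_iff hT hμ]; omega)
    obtain ⟨c, hrc, hc⟩ := (rowWord_eq_succ_iff hT hμ).1 hr
    obtain ⟨d, hsd, hd⟩ := (rowWord_eq_succ_iff hT hμ).1 hs
    exact ⟨(r, c), hrc, (s, d), hsd, hc, hd, by simpa [hr, hs] using hlt⟩
  · rintro ⟨⟨r, c⟩, hrc, ⟨s, d⟩, hsd, hc, hd, hlt⟩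
    rw [rowWord_entry hT hμ hrc hc, rowWord_entry hT hμ hsd hd]
    exact Nat.succ_lt_succ hlt

end Tableau

section TableauOfWord

/-- The length of the shortest prefix of `u` in which the letter `r + 1` occurs more than `c`
times: the entry in row `r` and column `c` of the tableau encoded by `u`. -/
def wordEntry (u : ℕ → ℕ) (r c : ℕ) : ℕ :=
  sInf {m | c < content u m r}

variable {n : ℕ} {u : ℕ → ℕ}

lemma wordEntry_le_iff {r c : ℕ} (hc : c < content u n r) (m : ℕ) :
    wordEntry u r c ≤ m ↔ c < content u m r :=
  ⟨fun h => (Nat.sInf_mem (s := {m | c < content u m r}) ⟨n, hc⟩).trans_le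
    (Nat.count_monotone _ h), fun h => Nat.sInf_le h⟩

lemma wordEntry_eq_succ_iff {r c k : ℕ} (hc : c < content u n r) :
    wordEntry u r c = k + 1 ↔ u k = r + 1 ∧ c = content u k r := by
  have h : wordEntry u r c = k + 1 ↔ c < content u (k + 1) r ∧ ¬c < content u k r := by
    rw [← wordEntry_le_iff hc, ← wordEntry_le_iff hc]
    omega
  rw [h, content_succ, Pi.add_apply, box]
  split_ifs with hk <;> simp only [hk, true_and, false_and, iff_false] <;> omega

lemma wordEntry_lt_of_row_lt {r s c : ℕ} (hu : IsBallot n u) (hrs : r < s)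
    (hc : c < content u n s) : wordEntry u r c < wordEntry u s c := by
  have hr : c < content u n r := hc.trans_le (hu n le_rfl hrs.le)
  have hle : wordEntry u r c ≤ wordEntry u s c := by
    have hm : wordEntry u s c ≤ n := (wordEntry_le_iff hc n).2 hc
    rw [wordEntry_le_iff hr]
    exact ((wordEntry_le_iff hc _).1 le_rfl).trans_le (hu _ hm hrs.le)
  refine hle.lt_of_ne fun heq => ?_
  obtain ⟨k, hk⟩ : ∃ k, wordEntry u s c = k + 1 := by
    refine Nat.exists_eq_succ_of_ne_zero fun h0 => ?_
    simpa [content_zero] using (wordEntry_le_iff hc 0).1 h0.le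
  have hs := ((wordEntry_eq_succ_iff hc).1 hk).1
  have hr := ((wordEntry_eq_succ_iff hr).1 (heq.trans hk)).1
  omega

variable {μ : YoungDiagram}

lemma lt_content_of_mem (hμ : content u n = μ.rowLen) {r c : ℕ} (hrc : (r, c) ∈ μ) :
    c < content u n r := by
  rwa [hμ, ← YoungDiagram.mem_iff_lt_rowLen]

/-- The tableau of shape `μ` encoded by the ballot word `u` of content `μ`. -/
def wordTableau (hu : IsBallot n u) (hμ : content u n = μ.rowLen) :
    SemistandardYoungTableau μ where
  entry r c := if (r, c) ∈ μ then wordEntry u r c else 0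
  row_weak' := by
    intro r c d hcd hrd
    have hrc := μ.up_left_mem le_rfl hcd.le hrd
    have hd := lt_content_of_mem hμ hrd
    rw [if_pos hrc, if_pos hrd, wordEntry_le_iff (lt_content_of_mem hμ hrc)]
    exact hcd.trans ((wordEntry_le_iff hd _).1 le_rfl)
  col_strict' := by
    intro r s c hrs hsc
    rw [if_pos (μ.up_left_mem hrs.le le_rfl hsc), if_pos hsc]
    exact wordEntry_lt_of_row_lt hu hrs (lt_content_of_mem hμ hsc)
  zeros' hrc := if_neg hrc

lemma wordTableau_apply (hu : IsBallot n u) (hμ : content u n = μ.rowLen) {r c : ℕ}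
    (hrc : (r, c) ∈ μ) : wordTableau hu hμ r c = wordEntry u r c :=
  if_pos hrc

lemma mem_wordTableau_iff (hu : IsBallot n u) (hμ : content u n = μ.rowLen) {r c k : ℕ}
    (hk : k < n) : (r, c) ∈ μ ∧ wordTableau hu hμ r c = k + 1 ↔
      u k = r + 1 ∧ c = content u k r := by
  constructor
  · rintro ⟨hrc, hT⟩
    rwa [wordTableau_apply hu hμ hrc, wordEntry_eq_succ_iff (lt_content_of_mem hμ hrc)] at hT
  · rintro ⟨hr, rfl⟩
    have hc : content u k r < content u n r := by
      refine lt_of_lt_of_le ?_ (Nat.count_monotone _ (Nat.succ_le_of_lt hk))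
      simp [content, Nat.count_succ, hr]
    have hrc : (r, content u k r) ∈ μ := by rwa [YoungDiagram.mem_iff_lt_rowLen, ← hμ]
    exact ⟨hrc, by rw [wordTableau_apply hu hμ hrc, wordEntry_eq_succ_iff hc]; exact ⟨hr, rfl⟩⟩

lemma isStdYT_wordTableau (hu : IsLatticeWord n u) (hμ : content u n = μ.rowLen) :
    IsStdYT n (wordTableau hu.isBallot hμ) := by
  intro i hi
  obtain ⟨k, rfl⟩ := Nat.exists_eq_add_of_le' (Finset.mem_Icc.1 hi).1
  have hk : k < n := Nat.lt_of_succ_le (Finset.mem_Icc.1 hi).2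
  obtain ⟨r, hr⟩ := Nat.exists_eq_succ_of_ne_zero (n := u k) (by rw [Ne, hu.eq_zero_iff]; omega)
  refine Finset.card_eq_one.2 ⟨(r, content u k r), ?_⟩
  ext ⟨s, c⟩
  rw [Finset.mem_filter, YoungDiagram.mem_cells, mem_wordTableau_iff hu.isBallot hμ hk, hr,
    Finset.mem_singleton, Prod.mk.injEq]
  grind

lemma rowWord_wordTableau (hu : IsLatticeWord n u) (hμ : content u n = μ.rowLen)
    (hcard : μ.card = n) : rowWord (wordTableau hu.isBallot hμ) = u := by
  have hT := isStdYT_wordTableau hu hμ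
  ext k
  by_cases hk : k < n
  · obtain ⟨r, hr⟩ := Nat.exists_eq_succ_of_ne_zero (n := u k) (by rw [Ne, hu.eq_zero_iff]; omega)
    rw [hr]
    exact (rowWord_eq_succ_iff hT hcard).2 ⟨_, (mem_wordTableau_iff hu.isBallot hμ hk).2 ⟨hr, rfl⟩⟩
  · rw [(hu.eq_zero_iff k).2 (by omega), (rowWord_eq_zero_iff hT hcard k).2 (by omega)]

lemma dCoef_eq_card_words (hμ : μ.card = n) (I : Finset ℕ) :
    dCoef μ n I =
      Nat.card {u // (IsLatticeWord n u ∧ content u n = μ.rowLen) ∧ wordAsc n u = I} := by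
  refine Nat.card_congr (Equiv.ofBijective (fun T => ⟨rowWord T.1,
    ⟨isLatticeWord_rowWord T.2.1 hμ, content_rowWord_eq_rowLen T.2.1 hμ⟩,
    (wordAsc_rowWord T.2.1 hμ).trans T.2.2⟩) ⟨?_, ?_⟩)
  · rintro ⟨T, hT⟩ ⟨T', hT'⟩ h
    exact Subtype.ext (rowWord_injective hT.1 hT'.1 hμ (congrArg Subtype.val h))
  · rintro ⟨u, ⟨hu, hcontent⟩, rfl⟩
    have hT := isStdYT_wordTableau hu hcontent
    have hword := rowWord_wordTableau hu hcontent hμ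
    exact ⟨⟨_, hT, by rw [← wordAsc_rowWord hT hμ, hword]⟩, Subtype.ext hword⟩

end TableauOfWord

/-! ### Partitions -/

section Partition

lemma sum_countP_lt {n : ℕ} {s : Multiset ℕ} (hs : ∀ a ∈ s, a ≤ n) :
    ∑ j ∈ Finset.range n, s.countP (j < ·) = s.sum := by
  induction s using Multiset.induction with
  | empty => simp
  | cons a s ih =>
    have ha : (Finset.range n).filter (· < a) = Finset.range a := by
      have := hs a (Multiset.mem_cons_self a s)
      ext j
      rw [Finset.mem_filter, Finset.mem_range, Finset.mem_range]
      omega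
    simp only [Multiset.countP_cons, Finset.sum_add_distrib,
      ih fun b hb => hs b (Multiset.mem_cons_of_mem hb), ← Finset.card_filter, ha,
      Finset.card_range, Multiset.sum_cons, add_comm]

lemma countP_lt_eq_count_add (s : Multiset ℕ) (a : ℕ) :
    s.countP (a < ·) = s.count (a + 1) + s.countP (a + 1 < ·) := by
  induction s using Multiset.induction with
  | empty => simp
  | cons b s ih =>
    rw [Multiset.countP_cons, Multiset.countP_cons, Multiset.count_cons, ih]
    grind

variable {n : ℕ}

lemma countP_parts_le (p : n.Partition) (j : ℕ) : p.parts.countP (j < ·) ≤ n := by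
  have hcard : p.parts.card ≤ p.parts.sum := by
    simpa using Multiset.card_nsmul_le_sum fun _ => p.parts_pos
  exact (Multiset.countP_le_card _ _).trans (hcard.trans_eq p.parts_sum)

lemma mem_toYD {p : n.Partition} {i j : ℕ} :
    (i, j) ∈ toYD p ↔ i < p.parts.countP (j < ·) := by
  rw [← YoungDiagram.mem_cells, toYD, Finset.mem_filter, Finset.mem_product, Finset.mem_range,
    Finset.mem_range, ← Multiset.countP_eq_card_filter]
  refine ⟨And.right, fun h => ⟨⟨h.trans_le (countP_parts_le p j), ?_⟩, h⟩⟩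
  obtain ⟨a, ha, hja⟩ := Multiset.countP_pos.1 (Nat.zero_lt_of_lt h)
  exact hja.trans_le (Nat.Partition.le_of_mem_parts ha)

lemma card_toYD (p : n.Partition) : (toYD p).card = n := by
  have hcolumn : ∀ j, ((Finset.range n).filter fun i => i < p.parts.countP (j < ·)) =
      Finset.range (p.parts.countP (j < ·)) := by
    intro j
    have := countP_parts_le p j
    ext i
    rw [Finset.mem_filter, Finset.mem_range, Finset.mem_range]
    omega
  simp only [YoungDiagram.card, toYD, Finset.card_filter, Finset.sum_product_right,
    ← Multiset.countP_eq_card_filter]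
  simp only [← Finset.card_filter, hcolumn, Finset.card_range]
  rw [sum_countP_lt fun _ => Nat.Partition.le_of_mem_parts, p.parts_sum]

lemma rowLen_toYD_injective {p q : n.Partition} (h : (toYD p).rowLen = (toYD q).rowLen) :
    p = q := by
  have hlt : ∀ j, p.parts.countP (j < ·) = q.parts.countP (j < ·) := fun j =>
    eq_of_forall_lt_iff fun i => by
      rw [← mem_toYD, ← mem_toYD, YoungDiagram.mem_iff_lt_rowLen, h, YoungDiagram.mem_iff_lt_rowLen]
  refine Nat.Partition.ext (Multiset.ext.2 fun a => ?_)
  rcases a with _ | a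
  · rw [Multiset.count_eq_zero_of_notMem fun h0 => (p.parts_pos h0).false,
      Multiset.count_eq_zero_of_notMem fun h0 => (q.parts_pos h0).false]
  · have := hlt a
    rw [countP_lt_eq_count_add, countP_lt_eq_count_add q.parts, hlt (a + 1)] at this
    exact add_right_cancel this

lemma exists_rowLen_toYD_eq {R : ℕ} {f : ℕ → ℕ} (hf : Antitone f) (hR : ∀ r, R ≤ r → f r = 0)
    (hsum : ∑ r ∈ Finset.range R, f r = n) : ∃ p : n.Partition, (toYD p).rowLen = f := by
  let p := Nat.Partition.ofSums n ((Finset.range R).val.map f) hsum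
  have hparts : p.parts = ((Finset.range R).val.map f).filter (· ≠ 0) := rfl
  have hcount : ∀ j, p.parts.countP (j < ·) = ((Finset.range R).filter (j < f ·)).card := by
    intro j
    rw [hparts, Multiset.countP_filter, Multiset.countP_map, Finset.card, Finset.filter_val]
    congr 1
    refine Multiset.filter_congr fun r _ => ?_
    omega
  refine ⟨p, funext fun i => eq_of_forall_lt_iff fun j => ?_⟩
  have hlower : IsLowerSet (((Finset.range R).filter (j < f ·) : Finset ℕ) : Set ℕ) := by
    intro r s hsr hr
    simp only [Finset.coe_filter, Finset.mem_range, Set.mem_ofPred_eq] at hr ⊢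
    exact ⟨hsr.trans_lt hr.1, hr.2.trans_le (hf hsr)⟩
  rw [← YoungDiagram.mem_iff_lt_rowLen, mem_toYD, hcount, ← mem_iff_lt_card_of_isLowerSet hlower,
    Finset.mem_filter, Finset.mem_range]
  refine and_iff_right_of_imp fun hj => ?_
  by_contra! hi
  simp [hR i hi] at hj

lemma IsLatticeWord.exists_shape {u : ℕ → ℕ} (hu : IsLatticeWord n u) :
    ∃ p : n.Partition, (toYD p).rowLen = content u n := by
  obtain ⟨R, hR⟩ := ((Finset.range n).image u).exists_le
  have hR : ∀ k < n, u k ≤ R := fun k hk =>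
    hR _ (Finset.mem_image_of_mem u (Finset.mem_range.2 hk))
  refine exists_rowLen_toYD_eq (R := R) (hu.isBallot n le_rfl) (fun r hr => ?_) ?_
  · refine Nat.count_iff_forall_not.2 fun k hk => ?_
    have := hR k hk
    omega
  · have hpos : ∀ k < n, u k ≠ 0 := fun k hk => by
      rw [Ne, hu.eq_zero_iff]
      omega
    have hmaps : ∀ k ∈ Finset.range n, u k - 1 ∈ Finset.range R := by
      intro k hk
      rw [Finset.mem_range] at hk ⊢
      have := hR k hk
      have := hpos k hk
      omega
    refine Eq.trans (Finset.sum_congr rfl fun r _ => ?_)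
      ((Finset.card_eq_sum_card_fiberwise hmaps).symm.trans (Finset.card_range n))
    rw [content, Nat.count_eq_card_filter_range]
    refine congrArg Finset.card (Finset.filter_congr fun k hk => ?_)
    have := hpos k (Finset.mem_range.1 hk)
    omega

end Partition

section Shape

variable {n : ℕ}

/-- The shape of `σ` under the Robinson–Schensted correspondence. -/
def shape (σ : Equiv.Perm (Fin n)) : n.Partition :=
  (isLatticeWord_recordingWord σ).exists_shape.choose

lemma rowLen_shape (σ : Equiv.Perm (Fin n)) :
    (toYD (shape σ)).rowLen = content (recordingWord σ) n :=
  (isLatticeWord_recordingWord σ).exists_shape.choose_spec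

lemma shape_eq_iff {σ : Equiv.Perm (Fin n)} {p : n.Partition} :
    shape σ = p ↔ content (recordingWord σ) n = (toYD p).rowLen := by
  rw [← rowLen_shape]
  exact ⟨fun h => by rw [h], rowLen_toYD_injective⟩

lemma card_shape_eq (I J : Finset ℕ) (p : n.Partition) :
    Nat.card {σ : Equiv.Perm (Fin n) // (permDes σ = I ∧ permDes σ⁻¹ = J) ∧ shape σ = p} =
      dCoef (toYD p) n I * dCoef (toYD p) n J := by
  rw [dCoef_eq_card_words (card_toYD p), dCoef_eq_card_words (card_toYD p), ← Nat.card_prod]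
  refine Nat.card_congr (Equiv.ofBijective (fun σ =>
    (⟨recordingWord σ.1, ⟨isLatticeWord_recordingWord _, shape_eq_iff.1 σ.2.2⟩,
        (wordAsc_recordingWord _).trans σ.2.1.1⟩,
      ⟨recordingWord σ.1⁻¹, ⟨isLatticeWord_recordingWord _,
        (content_recordingWord_inv _).trans (shape_eq_iff.1 σ.2.2)⟩,
        (wordAsc_recordingWord _).trans σ.2.1.2⟩)) ⟨?_, ?_⟩)
  · intro σ τ h
    simp only [Prod.mk.injEq, Subtype.mk.injEq] at h
    exact Subtype.ext (recordingWord_injective h.1 h.2)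
  · rintro ⟨⟨q, ⟨hq, hqp⟩, rfl⟩, ⟨w, ⟨hw, hwp⟩, rfl⟩⟩
    obtain ⟨σ, rfl, rfl⟩ := exists_recordingWord_eq hq hw (hqp.trans hwp.symm)
    exact ⟨⟨σ, ⟨(wordAsc_recordingWord σ).symm, (wordAsc_recordingWord σ⁻¹).symm⟩,
      shape_eq_iff.2 hqp⟩, rfl⟩

lemma card_mul_eq_one_eq_card_inv (I J : Finset ℕ) :
    Nat.card {st : Equiv.Perm (Fin n) × Equiv.Perm (Fin n) //
        st.1 * st.2 = 1 ∧ permDes st.1 = I ∧ permDes st.2 = J} =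
      Nat.card {σ : Equiv.Perm (Fin n) // permDes σ = I ∧ permDes σ⁻¹ = J} := by
  refine Nat.card_congr (Equiv.ofBijective (fun st => ⟨st.1.1, st.2.2.1, ?_⟩) ⟨?_, ?_⟩)
  · rw [← eq_inv_of_mul_eq_one_right st.2.1, st.2.2.2]
  · rintro ⟨⟨σ, τ⟩, hστ, _⟩ ⟨⟨σ', τ'⟩, hστ', _⟩ h
    obtain rfl : σ = σ' := congrArg Subtype.val h
    obtain rfl : τ = τ' := mul_left_cancel (hστ.trans hστ'.symm)
    rfl
  · rintro ⟨σ, hσ⟩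
    exact ⟨⟨(σ, σ⁻¹), mul_inv_cancel σ, hσ⟩, rfl⟩

end Shape

/-- The number of pairs `(σ, τ)` of permutations of `S_n` with `στ = id`,
`Des(σ) = I` and `Des(τ) = J` is `Σ_{λ ⊢ n} d_{λ,I} d_{λ,J}`. -/
theorem stmt6 (n : ℕ) (hn : 1 ≤ n) (I J : Finset ℕ) :
    Nat.card {st : Equiv.Perm (Fin n) × Equiv.Perm (Fin n) //
        st.1 * st.2 = 1 ∧ permDes st.1 = I ∧ permDes st.2 = J} =
      ∑ p : n.Partition, dCoef (toYD p) n I * dCoef (toYD p) n J := by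
  calc
    _ = Nat.card {σ : Equiv.Perm (Fin n) // permDes σ = I ∧ permDes σ⁻¹ = J} :=
      card_mul_eq_one_eq_card_inv I J
    _ = ∑ p : n.Partition, Nat.card {σ : Equiv.Perm (Fin n) //
          (permDes σ = I ∧ permDes σ⁻¹ = J) ∧ shape σ = p} := by
      simp only [Nat.card_eq_fintype_card, Fintype.card_subtype,
        ← Finset.filter_filter _ (shape · = _)]
      exact Finset.card_eq_sum_card_fiberwise fun _ _ => Finset.mem_univ _
    _ = ∑ p : n.Partition, dCoef (toYD p) n I * dCoef (toYD p) n J :=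
      Finset.sum_congr rfl fun p _ => card_shape_eq I J p
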